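/- Two connected finite graphs G and H are CR-similar if and only if their universal covers U_G and U_H are isomorphic. -/

import Mathlib

/-- The type of colors at round `r` of color refinement. -/
def CType : ℕ → Type
  | 0 => Unit
  | r + 1 => Multiset (CType r)

/-- The color of vertex `x` after `r` rounds of color refinement on `G`. -/
noncomputable def crColor {V : Type*} [Fintype V] (G : SimpleGraph V) :
    (r : ℕ) → V → CType r
  | 0, _ => ()
  | r + 1, x => ((G.neighborSet x).toFinite.toFinset).val.map (crColor G r)

/-- The full color-refinement color sequence of a vertex. -/
noncomputable def crSeq {V : Type*} [Fintype V] (G : SimpleGraph V) (x : V) :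
    (r : ℕ) → CType r :=
  fun r => crColor G r x

/-- The set of full color sequences arising at vertices of `G`. -/
noncomputable def crSet {V : Type*} [Fintype V] (G : SimpleGraph V) :
    Set ((r : ℕ) → CType r) :=
  Set.range (crSeq G)

/-- `l` is a non-backtracking walk in `G` starting at `x`. -/
def IsNBWalk {V : Type*} (G : SimpleGraph V) (x : V) (l : List V) : Prop :=
  l ≠ [] ∧ l.head? = some x ∧ l.Chain' G.Adj ∧
    ∀ i : ℕ, (h : i + 2 < l.length) → l[i]'(by omega) ≠ l[i + 2]'h

/-- Vertices of the universal cover of `G` based at `x`: all non-backtracking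
walks starting at `x`. -/
def Cover {V : Type*} (G : SimpleGraph V) (x : V) : Type _ :=
  {l : List V // IsNBWalk G x l}

/-- The universal cover `U_G` (based at `x`) as a graph: a walk is adjacent to
each of its one-step extensions. -/
def coverGraph {V : Type*} (G : SimpleGraph V) (x : V) : SimpleGraph (Cover G x) :=
  SimpleGraph.fromRel (fun a b => ∃ v : V, b.1 = a.1 ++ [v])

/-!
The endpoint projection `U_G → G` is a covering map, and color refinement cannot tell apart the two
images of a vertex under two covering maps. An isomorphism `U_G ≃ U_H` makes `U_G` a common covering
of `G` and `H`, so that the same color sequences arise in both.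

Conversely, color refinement stabilizes on finite graphs, so vertices with equal color sequences
have neighborhoods in bijection preserving color sequences. A transposition adjusts the bijection
to match the previous vertices of two corresponding walks; what remains matches the
non-backtracking continuations of the two walks. Starting from vertices with equal color sequences,
this carries walks from `G` to `H` and back, one step at a time. In `H` the color sequence of `x`
need not arise at `y`, which is why the base vertex has to be moved, edge by edge.
-/

/-- A covering map of graphs: a map restricting to a bijection from the neighborhood of every
vertex onto the neighborhood of its image. -/
def IsGraphCovering {V W : Type*} (G : SimpleGraph V) (H : SimpleGraph W) (f : V → W) : Prop :=
  ∀ u, Set.BijOn f (G.neighborSet u) (H.neighborSet (f u))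

namespace IsGraphCovering

variable {U V W : Type*} {F : SimpleGraph U} {G : SimpleGraph V} {H : SimpleGraph W}

theorem comp {g : V → W} {f : U → V} (hg : IsGraphCovering G H g) (hf : IsGraphCovering F G f) :
    IsGraphCovering F H (g ∘ f) :=
  fun u => (hg (f u)).comp (hf u)

theorem of_iso (φ : G ≃g H) : IsGraphCovering G H φ := fun u =>
  ⟨fun _ hv => φ.map_adj_iff.2 hv, φ.injective.injOn, fun w hw =>
    ⟨φ.symm w, φ.map_adj_iff.1 (by simpa using hw), φ.apply_symm_apply w⟩⟩

theorem surjective [Nonempty V] {f : V → W} (hf : IsGraphCovering G H f) (hH : H.Preconnected) :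
    Function.Surjective f := by
  intro w
  obtain ⟨v₀⟩ := ‹Nonempty V›
  obtain ⟨p⟩ := hH w (f v₀)
  generalize hw₀ : f v₀ = w₀ at p
  induction p with
  | nil => exact ⟨v₀, hw₀⟩
  | cons hadj _ ih =>
    obtain ⟨v, rfl⟩ := ih hw₀
    obtain ⟨u, -, hu⟩ := (hf v).surjOn hadj.symm
    exact ⟨u, hu⟩

end IsGraphCovering

section ColorRefinement

theorem exists_bijOn_of_map_val_eq {α β γ : Type*} [Nonempty β] {s : Finset α} {t : Finset β}
    {c : α → γ} {d : β → γ} (h : s.val.map c = t.val.map d) :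
    ∃ f : α → β, Set.BijOn f s t ∧ Set.EqOn c (d ∘ f) s := by
  classical
  induction s using Finset.induction generalizing t with
  | empty =>
    obtain rfl : t = ∅ := by simpa [eq_comm] using h
    exact ⟨fun _ => Classical.arbitrary β, by simp, by simp⟩
  | insert a s ha ih =>
    have hca : c a ∈ t.val.map d := h ▸ Multiset.mem_map_of_mem c (Finset.mem_insert_self a s)
    obtain ⟨b, hb : b ∈ t, hba⟩ := Multiset.mem_map.1 hca
    rw [← Finset.insert_erase hb, Finset.insert_val_of_notMem ha,
      Finset.insert_val_of_notMem (Finset.notMem_erase b t), Multiset.map_cons, Multiset.map_cons,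
      hba, Multiset.cons_inj_right] at h
    obtain ⟨f, hf, hcd⟩ := ih h
    have hfa : Set.EqOn f (Function.update f a b) s := fun x hx =>
      (Function.update_of_ne (ne_of_mem_of_not_mem hx ha) b f).symm
    refine ⟨Function.update f a b, ?_, ?_⟩
    · simpa [hb] using (hf.congr hfa).insert (a := a) (by simp)
    · simpa [Set.EqOn, hba] using hcd.trans (hfa.comp_left (g := d))

variable {V W : Type*} [Fintype V] [Fintype W] {G : SimpleGraph V} {H : SimpleGraph W}

theorem crColor_succ_eq_map_of_bijOn {U : Type*} {f : U → V} {s : Finset U} {a : V}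
    (hf : Set.BijOn f s (G.neighborSet a)) (r : ℕ) :
    crColor G (r + 1) a = s.val.map (crColor G r ∘ f) := by
  classical
  have himage : (G.neighborSet a).toFinite.toFinset = s.image f := by
    ext v; simp [← hf.image_eq]
  rw [crColor, himage, Finset.image_val_of_injOn hf.injOn, Multiset.map_map]

theorem crColor_eq_of_isGraphCovering {U : Type*} {T : SimpleGraph U} {f : U → V} {g : U → W}
    (hf : IsGraphCovering T G f) (hg : IsGraphCovering T H g) (r : ℕ) (u : U) :
    crColor G r (f u) = crColor H r (g u) := by
  induction r generalizing u with
  | zero => rfl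
  | succ r ih =>
    have hfin : (T.neighborSet u).Finite :=
      Set.Finite.of_finite_image ((hf u).image_eq ▸ Set.toFinite _) (hf u).injOn
    lift T.neighborSet u to Finset U using hfin with s hs
    rw [crColor_succ_eq_map_of_bijOn (hs ▸ hf u), crColor_succ_eq_map_of_bijOn (hs ▸ hg u)]
    exact Multiset.map_congr rfl fun v _ => ih v

theorem crSet_eq_of_isGraphCovering {U : Type*} {T : SimpleGraph U} {f : U → V} {g : U → W}
    (hf : IsGraphCovering T G f) (hg : IsGraphCovering T H g)
    (hf' : Function.Surjective f) (hg' : Function.Surjective g) : crSet G = crSet H := by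
  have hcomp : crSeq G ∘ f = crSeq H ∘ g :=
    funext fun u => funext fun r => crColor_eq_of_isGraphCovering hf hg r u
  rw [crSet, crSet, ← hf'.range_comp, hcomp, hg'.range_comp]

/-- The color at round `r` as a function of the color at round `r + 1`. -/
def CType.truncate : (r : ℕ) → CType (r + 1) → CType r
  | 0, _ => ()
  | r + 1, c => Multiset.map (truncate r) c

theorem truncate_crColor_succ (G : SimpleGraph V) (r : ℕ) (a : V) :
    CType.truncate r (crColor G (r + 1) a) = crColor G r a := by
  induction r generalizing a with
  | zero => rfl
  | succ r ih =>
    exact (Multiset.map_map _ _ _).trans (Multiset.map_congr rfl fun v _ => ih v)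

theorem crColor_eq_of_le {r s : ℕ} (hrs : r ≤ s) {a : V} {b : W}
    (h : crColor G s a = crColor H s b) : crColor G r a = crColor H r b := by
  induction s, hrs using Nat.le_induction with
  | base => exact h
  | succ s _ ih => exact ih (by rw [← truncate_crColor_succ, h, truncate_crColor_succ])

theorem exists_forall_crSeq_eq_of_crColor_eq (G : SimpleGraph V) (H : SimpleGraph W) :
    ∃ r, ∀ a b, crColor G r a = crColor H r b → crSeq G a = crSeq H b := by
  have hpair (a : V) (b : W) :
      ∀ᶠ r in Filter.atTop, crColor G r a = crColor H r b → crSeq G a = crSeq H b := by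
    by_cases hab : crSeq G a = crSeq H b
    · exact .of_forall fun _ _ => hab
    · obtain ⟨r, hr⟩ := Function.ne_iff.1 hab
      filter_upwards [Filter.eventually_ge_atTop r] with s hs h
      exact absurd (crColor_eq_of_le hs h) hr
  exact (Filter.eventually_all.2 fun a => Filter.eventually_all.2 (hpair a)).exists

end ColorRefinement

/-- Two vertex colorings, one on each graph, are jointly equitable if vertices of equal color have
neighborhoods in color-preserving bijection. -/
def IsJointlyEquitable {V W C : Type*} (G : SimpleGraph V) (H : SimpleGraph W)
    (c : V → C) (d : W → C) : Prop :=
  ∀ ⦃a b⦄, c a = d b →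
    ∃ f : V → W, Set.BijOn f (G.neighborSet a) (H.neighborSet b) ∧
      Set.EqOn c (d ∘ f) (G.neighborSet a)

theorem isJointlyEquitable_crSeq {V W : Type*} [Fintype V] [Fintype W] (G : SimpleGraph V)
    (H : SimpleGraph W) : IsJointlyEquitable G H (crSeq G) (crSeq H) := by
  intro a b hab
  have : Nonempty W := ⟨b⟩
  obtain ⟨r, hr⟩ := exists_forall_crSeq_eq_of_crColor_eq G H
  obtain ⟨f, hf, hcol⟩ := exists_bijOn_of_map_val_eq (congrFun hab (r + 1))
  simp only [Set.Finite.coe_toFinset] at hf hcol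
  exact ⟨f, hf, fun v hv => hr _ _ (hcol hv)⟩

section Walks

variable {V : Type*} {G : SimpleGraph V}

theorem isNBWalk_singleton (a : V) : IsNBWalk G a [a] :=
  ⟨by simp, by simp, List.isChain_singleton a, by simp⟩

theorem isNBWalk_cons_cons {a v : V} {t : List V} :
    IsNBWalk G a (a :: v :: t) ↔ G.Adj a v ∧ t.head? ≠ some a ∧ IsNBWalk G v (v :: t) := by
  constructor
  · rintro ⟨-, -, hchain, hnb⟩
    obtain ⟨hadj, hchain⟩ := List.isChain_cons_cons.1 hchain
    refine ⟨hadj, ?_, by simp, by simp, hchain, fun i hi => hnb (i + 1) (Nat.succ_lt_succ hi)⟩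
    cases t with
    | nil => simp
    | cons w t => simpa [eq_comm] using hnb 0 (by simp)
  · rintro ⟨hadj, hhead, -, -, hchain, hnb⟩
    refine ⟨by simp, by simp, List.isChain_cons_cons.2 ⟨hadj, hchain⟩, fun i hi => ?_⟩
    match i, t with
    | 0, [] => simp at hi
    | 0, w :: t => simpa [eq_comm] using hhead
    | i + 1, _ => exact hnb i (Nat.lt_of_succ_lt_succ hi)

theorem IsNBWalk.exists_eq_cons {a : V} {l : List V} (hl : IsNBWalk G a l) : ∃ t, l = a :: t :=
  List.head?_eq_some_iff.1 hl.2.1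

theorem isNBWalk_concat {a v : V} {l : List V} (hl : l ≠ []) :
    IsNBWalk G a (l ++ [v]) ↔
      IsNBWalk G a l ∧ G.Adj (l.getLast hl) v ∧ l.dropLast.getLast? ≠ some v := by
  induction l generalizing a with
  | nil => exact absurd rfl hl
  | cons b t ih =>
    by_cases hab : b = a
    · subst hab
      cases t with
      | nil => simp [isNBWalk_cons_cons, isNBWalk_singleton]
      | cons w t =>
        have hih := ih (a := w) (List.cons_ne_nil w t)
        simp only [List.cons_append, isNBWalk_cons_cons] at hih ⊢
        rw [hih]
        cases t with
        | nil => simpa [isNBWalk_singleton, and_comm] using fun _ _ => ne_comm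
        | cons _ _ => simp [and_assoc]
    · simp [IsNBWalk, hab]

end Walks

section Cover

variable {V W : Type*} {G : SimpleGraph V} {H : SimpleGraph W} {x : V} {y : W}

theorem coverGraph_adj {u w : Cover G x} :
    (coverGraph G x).Adj u w ↔ (∃ v, w.1 = u.1 ++ [v]) ∨ ∃ v, u.1 = w.1 ++ [v] := by
  rw [coverGraph, SimpleGraph.fromRel_adj, and_iff_right_iff_imp]
  rintro (⟨v, h⟩ | ⟨v, h⟩) rfl <;> simp at h

instance : Nonempty (Cover G x) := ⟨⟨[x], isNBWalk_singleton x⟩⟩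

/-- The covering projection, sending a walk to its endpoint. -/
def Cover.proj (u : Cover G x) : V := u.1.getLast u.2.1

theorem Cover.adj_proj {u w : Cover G x} (h : (coverGraph G x).Adj u w) :
    G.Adj u.proj w.proj := by
  obtain ⟨l, hl⟩ := u
  obtain ⟨m, hm⟩ := w
  obtain ⟨v, rfl⟩ | ⟨v, rfl⟩ := coverGraph_adj.1 h
  · simpa [Cover.proj] using ((isNBWalk_concat hl.1).1 hm).2.1
  · simpa [Cover.proj] using ((isNBWalk_concat hm.1).1 hl).2.1.symm

theorem Cover.injOn_proj (u : Cover G x) :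
    Set.InjOn Cover.proj ((coverGraph G x).neighborSet u) := by
  have hturn {l : List V} {v w : V} (hl : l ≠ []) (h : IsNBWalk G x (l ++ [v] ++ [w])) :
      l.getLast hl ≠ w := by
    simpa [List.getLast?_eq_some_getLast hl] using ((isNBWalk_concat (by simp)).1 h).2.2
  obtain ⟨l, hl⟩ := u
  rintro ⟨m, hm⟩ hlm ⟨n, hn⟩ hln (hmn : m.getLast hm.1 = n.getLast hn.1)
  refine Subtype.ext (show m = n from ?_)
  obtain ⟨v, rfl⟩ | ⟨v, rfl⟩ := coverGraph_adj.1 hlm <;>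
    obtain ⟨w, hw⟩ | ⟨w, hw⟩ := coverGraph_adj.1 hln
  · subst hw
    simpa using hmn
  · subst hw
    exact absurd (by simpa using hmn.symm) (hturn hn.1 hm)
  · subst hw
    exact absurd (by simpa using hmn) (hturn hm.1 hn)
  · exact (List.append_inj' hw rfl).1

theorem Cover.surjOn_proj (u : Cover G x) :
    Set.SurjOn Cover.proj ((coverGraph G x).neighborSet u) (G.neighborSet u.proj) := by
  intro w hw
  obtain ⟨l, hl⟩ := u
  by_cases hback : l.dropLast.getLast? = some w
  · have hne : l.dropLast ≠ [] := by rintro h; simp [h] at hback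
    have hl' := hl
    rw [← List.dropLast_concat_getLast hl.1, isNBWalk_concat hne] at hl'
    refine ⟨⟨l.dropLast, hl'.1⟩,
      coverGraph_adj.2 (.inr ⟨_, (List.dropLast_concat_getLast hl.1).symm⟩), ?_⟩
    exact Option.some_injective _ ((List.getLast?_eq_some_getLast hne).symm.trans hback)
  · exact ⟨⟨l ++ [w], (isNBWalk_concat hl.1).2 ⟨hl, hw, hback⟩⟩,
      coverGraph_adj.2 (.inl ⟨w, rfl⟩), by simp [Cover.proj]⟩

theorem Cover.isGraphCovering_proj : IsGraphCovering (coverGraph G x) G Cover.proj :=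
  fun u => ⟨fun _ => Cover.adj_proj, u.injOn_proj, u.surjOn_proj⟩

/-- A map on vertex lists inducing a homomorphism from the universal cover of `G` based at `x` to
that of `H` based at `y`: it preserves non-backtracking walks, and the images of a walk and of a
one-step extension differ by one step, in either direction. -/
structure IsCoverMap (G : SimpleGraph V) (H : SimpleGraph W) (x : V) (y : W)
    (F : List V → List W) : Prop where
  isNBWalk {l : List V} : IsNBWalk G x l → IsNBWalk H y (F l)
  concat {l : List V} (v : V) : IsNBWalk G x l →
    (∃ w, F (l ++ [v]) = F l ++ [w]) ∨ ∃ w, F l = F (l ++ [v]) ++ [w]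

theorem IsCoverMap.adj {F : List V → List W} (hF : IsCoverMap G H x y F) {u w : Cover G x}
    (h : (coverGraph G x).Adj u w) :
    (coverGraph H y).Adj ⟨F u.1, hF.isNBWalk u.2⟩ ⟨F w.1, hF.isNBWalk w.2⟩ := by
  obtain ⟨l, hl⟩ := u
  obtain ⟨m, hm⟩ := w
  obtain ⟨v, rfl⟩ | ⟨v, rfl⟩ := coverGraph_adj.1 h
  · exact coverGraph_adj.2 (hF.concat v hl)
  · exact coverGraph_adj.2 (hF.concat v hm).symm

theorem IsCoverMap.nonempty_iso {F : List V → List W} {F' : List W → List V}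
    (hF : IsCoverMap G H x y F) (hF' : IsCoverMap H G y x F')
    (hleft : ∀ l, IsNBWalk G x l → F' (F l) = l) (hright : ∀ l, IsNBWalk H y l → F (F' l) = l) :
    Nonempty (coverGraph G x ≃g coverGraph H y) := by
  let e : Cover G x ≃ Cover H y :=
    { toFun := fun u => ⟨F u.1, hF.isNBWalk u.2⟩
      invFun := fun u => ⟨F' u.1, hF'.isNBWalk u.2⟩
      left_inv := fun u => Subtype.ext (hleft u.1 u.2)
      right_inv := fun u => Subtype.ext (hright u.1 u.2) }
  refine ⟨e, fun {u w} => ⟨fun h => ?_, hF.adj⟩⟩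
  have h' : (coverGraph G x).Adj (e.symm (e u)) (e.symm (e w)) := hF'.adj h
  simpa only [e.symm_apply_apply] using h'

end Cover

section Reroot

variable {V : Type*} {G : SimpleGraph V} {y z : V}

open Classical in
/-- Moves the starting point of a walk to the neighbor `z` of its first vertex, cancelling the
backtracking this creates if the walk already begins with a step to `z`. -/
noncomputable def reroot (z : V) (l : List V) : List V :=
  if l.tail.head? = some z then l.tail else z :: l

theorem isCoverMap_reroot (h : G.Adj y z) : IsCoverMap G G y z (reroot z) where
  isNBWalk {l} hl := by
    obtain ⟨t, rfl⟩ := hl.exists_eq_cons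
    unfold reroot
    split_ifs with hz
    · obtain ⟨s, rfl⟩ := List.head?_eq_some_iff.1 hz
      exact (isNBWalk_cons_cons.1 hl).2.2
    · exact isNBWalk_cons_cons.2 ⟨h.symm, hz, hl⟩
  concat {l} v hl := by
    obtain ⟨t, rfl⟩ := hl.exists_eq_cons
    rcases t with _ | ⟨w, t⟩
    · by_cases hv : v = z
      · exact .inr ⟨y, by simp [reroot, hv]⟩
      · exact .inl ⟨v, by simp [reroot, hv]⟩
    · by_cases hw : w = z <;> exact .inl ⟨v, by simp [reroot, hw]⟩

theorem reroot_reroot {l : List V} (hl : IsNBWalk G y l) : reroot y (reroot z l) = l := by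
  obtain ⟨t, rfl⟩ := hl.exists_eq_cons
  by_cases hz : t.head? = some z
  · obtain ⟨s, rfl⟩ := List.head?_eq_some_iff.1 hz
    simp [reroot, (isNBWalk_cons_cons.1 hl).2.1]
  · simp [reroot, hz]

theorem nonempty_coverGraph_iso_of_reachable (h : G.Reachable y z) :
    Nonempty (coverGraph G y ≃g coverGraph G z) := by
  obtain ⟨p⟩ := h
  induction p with
  | nil => exact ⟨.refl⟩
  | cons hadj _ ih =>
    obtain ⟨φ⟩ := ih
    obtain ⟨ψ⟩ := (isCoverMap_reroot hadj).nonempty_iso (isCoverMap_reroot hadj.symm)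
      (fun _ => reroot_reroot) (fun _ => reroot_reroot)
    exact ⟨φ.comp ψ⟩

end Reroot

section NBTail

variable {V : Type*} {G : SimpleGraph V}

/-- The vertices of `t` continue a non-backtracking walk whose last step leads from `p` to `a`. The
choice `p = a` imposes no condition on the first vertex of `t` beyond adjacency to `a`, so it
encodes the start of a walk. -/
def IsNBTail (G : SimpleGraph V) (p a : V) (t : List V) : Prop :=
  IsNBWalk G a (a :: t) ∧ t.head? ≠ some p

theorem isNBTail_nil (p a : V) : IsNBTail G p a [] := ⟨isNBWalk_singleton a, by simp⟩

theorem isNBTail_cons {p a v : V} {t : List V} :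
    IsNBTail G p a (v :: t) ↔ v ∈ G.neighborSet a \ {p} ∧ IsNBTail G a v t := by
  simp only [IsNBTail, isNBWalk_cons_cons, List.head?_cons, ne_eq, Option.some_inj, Set.mem_sdiff,
    SimpleGraph.mem_neighborSet, Set.mem_singleton_iff]
  tauto

theorem isNBTail_self {a : V} {t : List V} : IsNBTail G a a t ↔ IsNBWalk G a (a :: t) := by
  refine and_iff_left_of_imp fun h hhead => ?_
  obtain ⟨s, rfl⟩ := List.head?_eq_some_iff.1 hhead
  exact (isNBWalk_cons_cons.1 h).1.ne rfl

end NBTail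

/-- A rule for carrying non-backtracking walks from `G` to `H` and back, step by step. `Rel p q a b`
says that a walk whose last step is `p → a` may correspond to one whose last step is `q → b`; the
possible next vertices of the two are then matched by `next p q a b`. -/
structure WalkMatching {V W : Type*} (G : SimpleGraph V) (H : SimpleGraph W) where
  Rel : V → W → V → W → Prop
  next : V → W → V → W → PartialEquiv V W
  source_next {p q a b} : Rel p q a b → (next p q a b).source = G.neighborSet a \ {p}
  target_next {p q a b} : Rel p q a b → (next p q a b).target = H.neighborSet b \ {q}
  rel_next {p q a b v} : Rel p q a b → v ∈ (next p q a b).source → Rel a b v (next p q a b v)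

namespace WalkMatching

variable {V W : Type*} {G : SimpleGraph V} {H : SimpleGraph W}

/-- The same matching, read from `H` to `G`. -/
def symm (m : WalkMatching G H) : WalkMatching H G where
  Rel q p b a := m.Rel p q a b
  next q p b a := (m.next p q a b).symm
  source_next h := m.target_next h
  target_next h := m.source_next h
  rel_next {q p b a w} h hw := by
    simpa only [(m.next p q a b).right_inv hw] using
      m.rel_next h ((m.next p q a b).map_target hw)

/-- Carries over the continuation of a walk with last step `p → a` to one of the corresponding walk
with last step `q → b`. -/
def transport (m : WalkMatching G H) : V → W → V → W → List V → List W
  | _, _, _, _, [] => []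
  | p, q, a, b, v :: t => m.next p q a b v :: m.transport a b v (m.next p q a b v) t

variable (m : WalkMatching G H) {p a : V} {q b : W} {t : List V}

theorem isNBTail_transport (h : m.Rel p q a b) (ht : IsNBTail G p a t) :
    IsNBTail H q b (m.transport p q a b t) := by
  induction t generalizing p q a b with
  | nil => exact isNBTail_nil q b
  | cons v t ih =>
    obtain ⟨hv, ht⟩ := isNBTail_cons.1 ht
    rw [← m.source_next h] at hv
    exact isNBTail_cons.2
      ⟨m.target_next h ▸ (m.next p q a b).map_source hv, ih (m.rel_next h hv) ht⟩

theorem transport_symm_transport (h : m.Rel p q a b) (ht : IsNBTail G p a t) :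
    m.symm.transport q p b a (m.transport p q a b t) = t := by
  induction t generalizing p q a b with
  | nil => rfl
  | cons v t ih =>
    obtain ⟨hv, ht⟩ := isNBTail_cons.1 ht
    rw [← m.source_next h] at hv
    have hback : m.symm.next q p b a (m.next p q a b v) = v := (m.next p q a b).left_inv hv
    rw [transport, transport, hback, ih (m.rel_next h hv) ht]

theorem exists_transport_concat (p : V) (q : W) (a : V) (b : W) (t : List V) (v : V) :
    ∃ w, m.transport p q a b (t ++ [v]) = m.transport p q a b t ++ [w] := by
  induction t generalizing p q a b with
  | nil => exact ⟨_, rfl⟩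
  | cons u t ih =>
    obtain ⟨w, hw⟩ := ih a b u (m.next p q a b u)
    exact ⟨w, congrArg (_ :: ·) hw⟩

variable {x : V} {y : W}

theorem isCoverMap_transport (h : m.Rel x y x y) :
    IsCoverMap G H x y fun l => y :: m.transport x y x y l.tail where
  isNBWalk hl := by
    obtain ⟨t, rfl⟩ := hl.exists_eq_cons
    exact isNBTail_self.1 (m.isNBTail_transport h (isNBTail_self.2 hl))
  concat v hl := by
    obtain ⟨t, rfl⟩ := hl.exists_eq_cons
    obtain ⟨w, hw⟩ := m.exists_transport_concat x y x y t v
    exact .inl ⟨w, congrArg (y :: ·) hw⟩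

theorem cons_transport_symm_transport (h : m.Rel x y x y) {l : List V} (hl : IsNBWalk G x l) :
    x :: m.symm.transport y x y x (m.transport x y x y l.tail) = l := by
  obtain ⟨t, rfl⟩ := hl.exists_eq_cons
  rw [List.tail_cons, m.transport_symm_transport h (isNBTail_self.2 hl)]

theorem nonempty_coverGraph_iso (h : m.Rel x y x y) :
    Nonempty (coverGraph G x ≃g coverGraph H y) :=
  (m.isCoverMap_transport h).nonempty_iso (m.symm.isCoverMap_transport h)
    (fun _ => m.cons_transport_symm_transport h) (fun _ => m.symm.cons_transport_symm_transport h)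

end WalkMatching

namespace IsJointlyEquitable

variable {V W C : Type*} {G : SimpleGraph V} {H : SimpleGraph W} {c : V → C} {d : W → C}

theorem exists_bijOn_sdiff (h : IsJointlyEquitable G H c d) {a p : V} {b q : W}
    (hab : c a = d b) (hp : G.Adj a p) (hq : H.Adj b q) (hpq : c p = d q) :
    ∃ f : V → W, Set.BijOn f (G.neighborSet a \ {p}) (H.neighborSet b \ {q}) ∧
      Set.EqOn c (d ∘ f) (G.neighborSet a \ {p}) := by
  classical
  obtain ⟨f, hf, hcol⟩ := h hab
  let σ := Equiv.swap (f p) q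
  have hσ : Set.BijOn σ (H.neighborSet b) (H.neighborSet b) :=
    Equiv.swap_bijOn_self (iff_of_true (hf.mapsTo hp) hq)
  refine ⟨σ ∘ f, ?_, fun v hv => ?_⟩
  · simpa [σ] using (hσ.comp hf).sdiff_singleton hp
  · have hne : f v ≠ f p := fun hvp => hv.2 (hf.injOn hv.1 hp hvp)
    by_cases hvq : f v = q
    · calc c v = d (f v) := hcol hv.1
        _ = c p := by rw [hvq, hpq]
        _ = d (σ (f v)) := by rw [hvq, Equiv.swap_apply_right]; exact hcol hp
    · rw [Function.comp_apply, Function.comp_apply, Equiv.swap_apply_of_ne_of_ne hne hvq]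
      exact hcol hv.1

/-- The steps `p → a` and `q → b` have equal colors; the pairs `p = a`, `q = b` stand for the start
of a walk. -/
def EqColoredSteps (G : SimpleGraph V) (H : SimpleGraph W) (c : V → C) (d : W → C)
    (p : V) (q : W) (a : V) (b : W) : Prop :=
  c p = d q ∧ c a = d b ∧ (G.Adj a p ∧ H.Adj b q ∨ p = a ∧ q = b)

theorem exists_partialEquiv (h : IsJointlyEquitable G H c d) {p a : V} {q b : W}
    (hstep : EqColoredSteps G H c d p q a b) :
    ∃ e : PartialEquiv V W, e.source = G.neighborSet a \ {p} ∧ e.target = H.neighborSet b \ {q} ∧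
      ∀ v ∈ e.source, EqColoredSteps G H c d a b v (e v) := by
  have : Nonempty V := ⟨a⟩
  obtain ⟨hpq, hab, hcase⟩ := hstep
  obtain ⟨f, hf, hcol⟩ : ∃ f : V → W,
      Set.BijOn f (G.neighborSet a \ {p}) (H.neighborSet b \ {q}) ∧
        Set.EqOn c (d ∘ f) (G.neighborSet a \ {p}) := by
    obtain ⟨hp, hq⟩ | ⟨rfl, rfl⟩ := hcase
    · exact h.exists_bijOn_sdiff hab hp hq hpq
    · simpa using h hab
  exact ⟨hf.toPartialEquiv, rfl, rfl, fun v hv =>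
    ⟨hab, hcol hv, .inl ⟨G.adj_symm hv.1, H.adj_symm (hf.mapsTo hv).1⟩⟩⟩

theorem nonempty_coverGraph_iso (h : IsJointlyEquitable G H c d) {x : V} {y : W}
    (hxy : c x = d y) : Nonempty (coverGraph G x ≃g coverGraph H y) := by
  have : Inhabited V := ⟨x⟩
  have : Inhabited W := ⟨y⟩
  choose! e hsource htarget hstep using
    fun p q a b => h.exists_partialEquiv (p := p) (q := q) (a := a) (b := b)
  let m : WalkMatching G H :=
    { Rel := EqColoredSteps G H c d
      next := e
      source_next := hsource _ _ _ _
      target_next := htarget _ _ _ _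
      rel_next := fun h => hstep _ _ _ _ h _ }
  exact m.nonempty_coverGraph_iso ⟨hxy, hxy, .inr ⟨rfl, rfl⟩⟩

end IsJointlyEquitable

/-- Two connected finite graphs are CR-similar iff their universal covers are
isomorphic (the universal cover being independent of the base vertex, the base
vertices `x` and `y` are arbitrary). -/
theorem stmt_8 {VG VH : Type*} [Fintype VG] [Fintype VH]
    (G : SimpleGraph VG) (H : SimpleGraph VH)
    (hG : G.Connected) (hH : H.Connected) (x : VG) (y : VH) :
    crSet G = crSet H ↔ Nonempty (coverGraph G x ≃g coverGraph H y) := by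
  constructor
  · intro h
    obtain ⟨z, hz⟩ : crSeq G x ∈ crSet H := h ▸ Set.mem_range_self x
    obtain ⟨φ⟩ := (isJointlyEquitable_crSeq G H).nonempty_coverGraph_iso hz.symm
    obtain ⟨ψ⟩ := nonempty_coverGraph_iso_of_reachable (hH.preconnected z y)
    exact ⟨ψ.comp φ⟩
  · rintro ⟨φ⟩
    have hfG : IsGraphCovering (coverGraph G x) G Cover.proj := Cover.isGraphCovering_proj
    have hfH : IsGraphCovering (coverGraph G x) H (Cover.proj ∘ φ) :=
      Cover.isGraphCovering_proj.comp (.of_iso φ)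
    exact crSet_eq_of_isGraphCovering hfG hfH (hfG.surjective hG.preconnected)
      (hfH.surjective hH.preconnected)
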